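/- Every convex pentagon whose interior angles satisfy A + B + C = 360° and whose side lengths satisfy a = d admits a monohedral tiling of the plane that is not edge-to-edge (a non-edge-to-edge tiling). -/

import Mathlib

open EuclideanGeometry

noncomputable section

/-- The Euclidean plane. -/
abbrev Plane : Type := EuclideanSpace ℝ (Fin 2)

/-- A convex polygon with `n` vertices: `n` points of the plane in strictly convex
position, labeled in cyclic order (each segment joining cyclically consecutive
vertices lies on the boundary of the convex hull). -/
structure ConvexPolygon (n : ℕ) [NeZero n] where
  V : Fin n → Plane
  strictlyConvex : ∀ i : Fin n, V i ∉ convexHull ℝ (V '' {j | j ≠ i})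
  cyclic : ∀ i : Fin n, segment ℝ (V i) (V (i + 1)) ⊆ frontier (convexHull ℝ (Set.range V))

namespace ConvexPolygon

variable {n : ℕ} [NeZero n]

/-- The polygon, as a subset of the plane (the convex hull of its vertices). -/
def carrier (P : ConvexPolygon n) : Set Plane := convexHull ℝ (Set.range P.V)

/-- The interior angle (in radians) at the `i`-th vertex. -/
def angle (P : ConvexPolygon n) (i : Fin n) : ℝ :=
  EuclideanGeometry.angle (P.V (i - 1)) (P.V i) (P.V (i + 1))

/-- The length of the side joining the `i`-th vertex to the next one. -/
def side (P : ConvexPolygon n) (i : Fin n) : ℝ := dist (P.V i) (P.V (i + 1))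

end ConvexPolygon

/-- A convex pentagon.  Its angles `A, B, C, D, E` are `angle 0, …, angle 4` and
its sides `a, b, c, d, e` are `side 0, …, side 4`. -/
abbrev ConvexPentagon := ConvexPolygon 5

/-- `t` is an isometric copy of `P`. -/
def IsIsometricCopy (t P : Set Plane) : Prop :=
  ∃ g : Plane ≃ᵢ Plane, t = g '' P

/-- `T` is a monohedral tiling of the plane by isometric copies of `P`:
the tiles cover the plane and have pairwise disjoint interiors. -/
def IsMonohedralTiling (P : Set Plane) (T : Set (Set Plane)) : Prop :=
  (∀ t ∈ T, IsIsometricCopy t P) ∧ ⋃₀ T = Set.univ ∧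
    T.Pairwise fun t s => interior t ∩ interior s = ∅

/-- `x` is a vertex (extreme point) of the convex polygonal tile `t`. -/
def IsVertexOf (x : Plane) (t : Set Plane) : Prop := x ∈ Set.extremePoints ℝ t

/-- `e` is an edge (a full side) of the convex polygonal tile `t`: a segment
joining two distinct vertices of `t` that lies on the boundary of `t`. -/
def IsEdgeOf (e t : Set Plane) : Prop :=
  ∃ x y : Plane, x ≠ y ∧ IsVertexOf x t ∧ IsVertexOf y t ∧
    e = segment ℝ x y ∧ e ⊆ frontier t

/-- A tiling by convex polygons is edge-to-edge if any two distinct tiles meet in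
the empty set, a common vertex, or a common edge. -/
def IsEdgeToEdge (T : Set (Set Plane)) : Prop :=
  ∀ t ∈ T, ∀ s ∈ T, t ≠ s →
    t ∩ s = ∅ ∨
    (∃ x : Plane, t ∩ s = {x} ∧ IsVertexOf x t ∧ IsVertexOf x s) ∨
    (∃ e : Set Plane, t ∩ s = e ∧ IsEdgeOf e t ∧ IsEdgeOf e s)

/-- A tiling is periodic if translations by two linearly independent vectors map
every tile onto a tile. -/
def IsPeriodic (T : Set (Set Plane)) : Prop :=
  ∃ u v : Plane, LinearIndependent ℝ ![u, v] ∧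
    (∀ t ∈ T, (fun x => x + u) '' t ∈ T) ∧ (∀ t ∈ T, (fun x => x + v) '' t ∈ T)

/-- An isometry is a symmetry of the tiling `T` if it maps the tiles of `T` onto
the tiles of `T`. -/
def IsSymmetryOf (g : Plane ≃ᵢ Plane) (T : Set (Set Plane)) : Prop :=
  (fun t => g '' t) '' T = T

/-- A tiling is isohedral if its symmetry group acts transitively on the tiles. -/
def IsIsohedral (T : Set (Set Plane)) : Prop :=
  ∀ t ∈ T, ∀ s ∈ T, ∃ g : Plane ≃ᵢ Plane, IsSymmetryOf g T ∧ g '' t = s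

/-- Two tiles are equivalent if some symmetry of the tiling maps one onto the other. -/
def SymEquiv (T : Set (Set Plane)) (t s : Set Plane) : Prop :=
  ∃ g : Plane ≃ᵢ Plane, IsSymmetryOf g T ∧ g '' t = s

/-- A direct (orientation-preserving) isometry of the plane: an affine isometry
whose linear part has positive determinant. -/
def IsDirectIsometry (g : Plane ≃ᵢ Plane) : Prop :=
  ∃ (L : Plane ≃ₗᵢ[ℝ] Plane) (w : Plane),
    0 < LinearMap.det (L.toLinearEquiv : Plane →ₗ[ℝ] Plane) ∧ ∀ x, g x = L x + w

/-- Relabeling of the vertices of a pentagon: a cyclic shift by `k`, with the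
orientation reversed when `r = true`. -/
def relabel (k : Fin 5) (r : Bool) (i : Fin 5) : Fin 5 := if r then k - i else k + i

/-!
If `A + B + C = 2π`, the three exterior angles at `V₁`, `V₂`, `V₃` add up to `π`, so the sides `e`
and `c` are parallel. An affine map therefore turns the pentagon into the region under a graph over
`[0, 1]`, with the two parallel sides vertical and `d` on the axis. Continue this graph periodically
along the line through its end points: the resulting zigzag `F` satisfies `F (x + 1) = F x + δ`, and
since it has only two slopes, a half-turn maps it to itself. Hence the translates of the region by
multiples of `(1, δ)`, together with their half-turned copies above the zigzag, fill a row whose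
lower and upper boundaries are congruent staircases, and such rows stack up to cover the plane.
Translations and half-turns stay isometries under every affine change of coordinates.

If `δ ≠ 0`, the steps of the staircase put a vertex inside a vertical side. If `δ = 0`, the rows are
bounded by straight lines and can be slid against each other to the same effect.
-/

open Set

/-! ### Tilings in affine coordinates -/

section ExtremePoints

variable {E F : Type*} [AddCommGroup E] [Module ℝ E] [AddCommGroup F] [Module ℝ F]

theorem map_mem_extremePoints_image (g : E ≃ᵃ[ℝ] F) {K : Set E} {x : E}
    (hx : x ∈ extremePoints ℝ K) : g x ∈ extremePoints ℝ (g '' K) := by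
  refine ⟨mem_image_of_mem g hx.1, ?_⟩
  rintro _ ⟨y, hy, rfl⟩ _ ⟨z, hz, rfl⟩ hxyz
  have hopen : g '' openSegment ℝ y z = openSegment ℝ (g y) (g z) :=
    image_openSegment ℝ (g : E →ᵃ[ℝ] F) y z
  rw [← hopen, g.injective.mem_set_image] at hxyz
  exact congrArg g (hx.2 hy hz hxyz)

theorem zero_mem_extremePoints_Ici : (0 : ℝ) ∈ extremePoints ℝ (Ici (0 : ℝ)) := by
  refine ⟨self_mem_Ici, ?_⟩
  rintro y hy z hz ⟨a, b, ha, hb, -, hyz⟩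
  have hay : 0 ≤ a • y := smul_nonneg ha.le hy
  have hbz : 0 ≤ b • z := smul_nonneg hb.le hz
  exact (smul_eq_zero_iff_right ha.ne').1 (by linarith)

end ExtremePoints

theorem not_isEdgeToEdge_of_mem_openSegment {T : Set (Set Plane)} {t s : Set Plane}
    {x p q : Plane} (ht : t ∈ T) (hs : s ∈ T) (hx : IsVertexOf x t)
    (hxpq : x ∈ openSegment ℝ p q) (hpq : p ≠ q) (hp : p ∈ s) (hq : q ∈ s)
    (hxs : x ∈ s) : ¬ IsEdgeToEdge T := by
  intro hT
  have hxs' : ¬ IsVertexOf x s := fun h ↦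
    hpq ((h.2 hp hq hxpq).trans
      (h.2 hq hp (openSegment_symm ℝ p q ▸ hxpq)).symm)
  have hx_inter : x ∈ t ∩ s := ⟨hx.1, hxs⟩
  have hts : t ≠ s := by
    rintro rfl
    exact hxs' hx
  rcases hT t ht s hs hts with h | ⟨y, h, -, hy⟩ | ⟨_, h, -, y, z, -, hy, hz, rfl, -⟩
  · exact notMem_empty x (h ▸ hx_inter)
  · obtain rfl : x = y := by simpa only [h, mem_singleton_iff] using hx_inter
    exact hxs' hy
  · have hsub : segment ℝ y z ⊆ t := h ▸ inter_subset_left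
    rcases (mem_extremePoints_iff_forall_segment.1 hx).2 y (hsub (left_mem_segment ℝ y z))
      z (hsub (right_mem_segment ℝ y z)) (h ▸ hx_inter) with rfl | rfl
    exacts [hxs' hy, hxs' hz]

section Transport

variable {E : Type*}

theorem isIsometricCopy_image_image [AddCommGroup E] [Module ℝ E] (ψ : E ≃ᵃ[ℝ] Plane)
    {g : E ≃ᵃ[ℝ] E} {ε : ℝ} (hε : |ε| = 1) (hg : ∀ v, g.linear v = ε • v) (K : Set E) :
    IsIsometricCopy (ψ '' (g '' K)) (ψ '' K) := by
  let f : Plane ≃ᵃⁱ[ℝ] Plane := ⟨ψ.symm.trans (g.trans ψ), fun v ↦ by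
    simp [AffineEquiv.trans, hg, norm_smul, hε]⟩
  refine ⟨f.toIsometryEquiv, ?_⟩
  simp [f, image_image]

theorem isMonohedralTiling_range [NormedAddCommGroup E] [NormedSpace ℝ E]
    [FiniteDimensional ℝ E] {ι : Type*} (ψ : E ≃ᵃ[ℝ] Plane) {K : Set E} {g : ι → E ≃ᵃ[ℝ] E}
    (hg : ∀ i, ∃ ε : ℝ, |ε| = 1 ∧ ∀ v, (g i).linear v = ε • v)
    (hcover : ∀ p, ∃ i, p ∈ g i '' K)
    (hunique : ∀ p i j, p ∈ g i '' interior K → p ∈ g j '' interior K → i = j) :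
    IsMonohedralTiling (ψ '' K) (range fun i ↦ ψ '' (g i '' K)) := by
  refine ⟨?_, ?_, ?_⟩
  · rintro _ ⟨i, rfl⟩
    obtain ⟨ε, hε, hgε⟩ := hg i
    exact isIsometricCopy_image_image ψ hε hgε K
  · rw [sUnion_range, eq_univ_iff_forall]
    intro q
    obtain ⟨i, hi⟩ := hcover (ψ.symm q)
    exact mem_iUnion_of_mem i ⟨_, hi, ψ.apply_symm_apply q⟩
  · rintro _ ⟨i, rfl⟩ _ ⟨j, rfl⟩ hij
    rw [← disjoint_iff_inter_eq_empty, Set.disjoint_left]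
    have hinterior (i : ι) : interior (ψ '' (g i '' K)) = ψ '' (g i '' interior K) := by
      rw [← (g i).coe_toHomeomorphOfFiniteDimensional, Homeomorph.image_interior,
        ← ψ.coe_toHomeomorphOfFiniteDimensional, Homeomorph.image_interior]
    simp only [hinterior, forall_mem_image (f := ψ), ψ.injective.mem_set_image]
    intro p hpi hpj
    exact hij (congrArg (fun i ↦ ψ '' (g i '' K)) (hunique p i j hpi hpj))

theorem not_isEdgeToEdge_range [AddCommGroup E] [Module ℝ E] {ι : Type*} (ψ : E ≃ᵃ[ℝ] Plane)
    {K : Set E} {g : ι → E ≃ᵃ[ℝ] E} {v p q r : E} (hv : v ∈ extremePoints ℝ K) (hp : p ∈ K)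
    (hq : q ∈ K) (hr : r ∈ K) (hrpq : r ∈ openSegment ℝ p q) (hpq : p ≠ q) (i j : ι)
    (h : g i v = g j r) : ¬ IsEdgeToEdge (range fun i ↦ ψ '' (g i '' K)) := by
  have himage {z : E} (hz : z ∈ K) : ψ (g j z) ∈ ψ '' (g j '' K) :=
    mem_image_of_mem ψ (mem_image_of_mem (g j) hz)
  have hopen : ψ (g j r) ∈ openSegment ℝ (ψ (g j p)) (ψ (g j q)) := by
    have := mem_image_of_mem ((g j).trans ψ : E →ᵃ[ℝ] Plane) hrpq
    rwa [image_openSegment] at this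
  refine not_isEdgeToEdge_of_mem_openSegment (mem_range_self i) (mem_range_self j) ?_ hopen
    ((ψ.injective.comp (g j).injective).ne hpq) (himage hp) (himage hq) (himage hr)
  rw [← h]
  exact map_mem_extremePoints_image ψ (map_mem_extremePoints_image (g i) hv)

end Transport

theorem exists_int_le_and_lt_add_one {f : ℤ → ℝ} {m : ℝ} (hm : 0 < m)
    (hf : ∀ k, f k + m ≤ f (k + 1)) (y : ℝ) : ∃ k, f k ≤ y ∧ y < f (k + 1) := by
  have hmono : Monotone fun k : ℤ ↦ f k - k * m := monotone_int_of_le_succ fun k ↦ by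
    push_cast
    linarith [hf k]
  have hlow : ∃ k : ℤ, f k ≤ y := by
    obtain ⟨n, hn⟩ := exists_nat_ge ((f 0 - y) / m)
    rw [div_le_iff₀ hm] at hn
    have h := hmono (show (-n : ℤ) ≤ 0 by lia)
    push_cast at h
    exact ⟨-n, by linarith⟩
  have hbdd : ∃ b : ℤ, ∀ k, f k ≤ y → k ≤ b := by
    obtain ⟨n, hn⟩ := exists_nat_gt ((y - f 0) / m)
    rw [div_lt_iff₀ hm] at hn
    refine ⟨n, fun k hk ↦ le_of_not_gt fun hnk ↦ ?_⟩
    have h := hmono (show 0 ≤ k by lia)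
    have hnk' : (n : ℝ) * m ≤ k * m := mul_le_mul_of_nonneg_right (by exact_mod_cast hnk.le) hm.le
    push_cast at h
    linarith
  obtain ⟨k, hk, hmax⟩ := Int.exists_greatest_of_bdd hbdd hlow
  exact ⟨k, hk, lt_of_not_ge fun h ↦ by linarith [hmax _ h]⟩

/-! ### Tiling by the region under a graph -/

/-- The region over the unit interval between the axis and the graph of `F`. -/
def region (F : ℝ → ℝ) : Set (ℝ × ℝ) := {p | p.1 ∈ Icc 0 1 ∧ p.2 ∈ Icc 0 (F p.1)}

theorem interior_region_subset (F : ℝ → ℝ) :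
    interior (region F) ⊆ {p | p.1 ∈ Ioo 0 1 ∧ p.2 ∈ Ioo 0 (F p.1)} := by
  rintro ⟨x, y⟩ hp
  constructor
  · have hsection : (fun t ↦ (t, y)) ⁻¹' region F ⊆ Icc 0 1 := fun _ h ↦ h.1
    rw [← interior_Icc]
    exact interior_mono hsection (preimage_interior_subset_interior_preimage (by fun_prop) hp)
  · have hsection : Prod.mk x ⁻¹' region F ⊆ Icc 0 (F x) := fun _ h ↦ h.2
    rw [← interior_Icc]
    exact interior_mono hsection (preimage_interior_subset_interior_preimage (by fun_prop) hp)

theorem mk_zero_mem_extremePoints_region {F : ℝ → ℝ} {x : ℝ} (hx : x ∈ ({0, 1} : Set ℝ))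
    (hF : 0 ≤ F x) : (x, (0 : ℝ)) ∈ extremePoints ℝ (region F) := by
  rw [← extremePoints_Icc zero_le_one] at hx
  have hsub : region F ⊆ Icc 0 1 ×ˢ Ici 0 := fun p hp ↦ ⟨hp.1, hp.2.1⟩
  refine inter_extremePoints_subset_extremePoints_of_subset hsub ⟨⟨hx.1, le_rfl, hF⟩, ?_⟩
  rw [extremePoints_prod]
  exact ⟨hx, zero_mem_extremePoints_Ici⟩

/-- A function whose graph is invariant under the translation by `(1, δ)` and under the half-turn
about `((1 + a) / 2, H / 2)`, with a positive lower bound `m` on the unit interval.  The translates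
of the region under it on a unit interval and their half-turned copies above its graph fill a row
between two staircases. -/
structure IsRoof (F : ℝ → ℝ) (δ a H m : ℝ) : Prop where
  add_one (x : ℝ) : F (x + 1) = F x + δ
  reflect (x : ℝ) : F (1 + a - x) = H - F x
  pos : 0 < m
  le (x : ℝ) (hx : x ∈ Icc 0 1) : m ≤ F x

/-- The motions that place the tiles.  The flag selects translates (`false`) or half-turned
copies (`true`), `k` is the row of the tile and `n` its position in the row; consecutive
rows are displaced by `(η, H)`, consecutive tiles of a row by `(1, δ)`. -/
def placement (δ a H η : ℝ) : Bool × ℤ × ℤ → (ℝ × ℝ) ≃ᵃ[ℝ] (ℝ × ℝ)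
  | (false, k, n) => AffineEquiv.constVAdd ℝ _ (k * η + n, k * H + n * δ)
  | (true, k, n) => (LinearEquiv.neg ℝ).toAffineEquiv.trans
      (AffineEquiv.constVAdd ℝ _ (1 + a + k * η + n, (k + 1) * H + n * δ))

/-- The lower boundary of row `k`, a staircase. -/
def baseLine (δ H η : ℝ) (k : ℤ) (x : ℝ) : ℝ := k * H + δ * ⌊x - k * η⌋

/-- The graph separating the translates from the half-turned tiles in row `k`. -/
def roofLine (F : ℝ → ℝ) (H η : ℝ) (k : ℤ) (x : ℝ) : ℝ := k * H + F (x - k * η)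

section Placement

variable {δ a H η : ℝ} {k n : ℤ} {p : ℝ × ℝ} {K : Set (ℝ × ℝ)}

theorem placement_linear (i : Bool × ℤ × ℤ) :
    ∃ ε : ℝ, |ε| = 1 ∧ ∀ v, (placement δ a H η i).linear v = ε • v := by
  obtain ⟨_ | _, k, n⟩ := i
  · exact ⟨1, abs_one, fun v ↦ (one_smul ℝ v).symm⟩
  · exact ⟨-1, by rw [abs_neg, abs_one], fun v ↦ (neg_one_smul ℝ v).symm⟩

theorem mem_placement_false :
    p ∈ placement δ a H η (false, k, n) '' K ↔
      (p.1 - k * η - n, p.2 - k * H - n * δ) ∈ K := by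
  have hsymm : (placement δ a H η (false, k, n)).symm p =
      (p.1 - k * η - n, p.2 - k * H - n * δ) := by
    rw [AffineEquiv.symm_apply_eq]
    ext <;> simp [placement]
  rw [← AffineEquiv.coe_toEquiv, Equiv.image_eq_preimage_symm, mem_preimage, ← hsymm]
  rfl

theorem mem_placement_true :
    p ∈ placement δ a H η (true, k, n) '' K ↔
      (1 + a - (p.1 - k * η - n), (k + 1) * H + n * δ - p.2) ∈ K := by
  have hsymm : (placement δ a H η (true, k, n)).symm p =
      (1 + a - (p.1 - k * η - n), (k + 1) * H + n * δ - p.2) := by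
    rw [AffineEquiv.symm_apply_eq]
    ext <;> simp [placement]; ring
  rw [← AffineEquiv.coe_toEquiv, Equiv.image_eq_preimage_symm, mem_preimage, ← hsymm]
  rfl

end Placement

namespace IsRoof

variable {F : ℝ → ℝ} {δ a H m η : ℝ} {k n : ℤ} {p : ℝ × ℝ}

theorem sub_int (hF : IsRoof F δ a H m) (x : ℝ) (n : ℤ) : F (x - n) = F x - n * δ := by
  simpa using AddConstMapClass.map_sub_int' (⟨F, hF.add_one⟩ : AddConstMap ℝ ℝ 1 δ) x n

theorem add_le (hF : IsRoof F δ a H m) {x : ℝ} (hx : x - n ∈ Icc 0 1) : m + n * δ ≤ F x := by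
  linarith [hF.le _ hx, hF.sub_int x n]

theorem baseLine_add_le (hF : IsRoof F δ a H m) (k : ℤ) (x : ℝ) :
    baseLine δ H η k x + m ≤ roofLine F H η k x := by
  have hfract : x - k * η - ⌊x - k * η⌋ ∈ Icc (0 : ℝ) 1 :=
    ⟨Int.fract_nonneg _, (Int.fract_lt_one _).le⟩
  unfold baseLine roofLine
  linarith [hF.add_le hfract]

theorem baseLine_add_one (hη : η = a ∨ δ = 0) (k : ℤ) (x : ℝ) :
    baseLine δ H η (k + 1) x = (k + 1) * H + δ * ⌊x - k * η - a⌋ := by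
  unfold baseLine
  rcases hη with rfl | rfl
  · push_cast
    ring_nf
  · push_cast
    ring

theorem roofLine_add_le (hF : IsRoof F δ a H m) (hη : η = a ∨ δ = 0) (k : ℤ) (x : ℝ) :
    roofLine F H η k x + m ≤ baseLine δ H η (k + 1) x := by
  set u := x - k * η with hu
  have hreflect : 1 + a - u - (-⌊u - a⌋ : ℤ) ∈ Icc (0 : ℝ) 1 := by
    push_cast
    constructor <;> linarith [Int.floor_le (u - a), Int.lt_floor_add_one (u - a)]
  have hle := hF.add_le hreflect
  rw [hF.reflect] at hle
  push_cast at hle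
  rw [baseLine_add_one hη, roofLine, ← hu]
  linarith

theorem monotone_baseLine (hF : IsRoof F δ a H m) (hη : η = a ∨ δ = 0) (x : ℝ) :
    Monotone fun k ↦ baseLine δ H η k x :=
  monotone_int_of_le_succ fun k ↦ by
    linarith [hF.pos, hF.baseLine_add_le (η := η) k x, hF.roofLine_add_le hη k x]

theorem mem_placement_false_region (hF : IsRoof F δ a H m) :
    p ∈ placement δ a H η (false, k, n) '' region F ↔
      p.1 - k * η - n ∈ Icc 0 1 ∧ p.2 ∈ Icc (k * H + δ * n) (roofLine F H η k p.1) := by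
  rw [mem_placement_false, region, mem_ofPred_eq, hF.sub_int, roofLine]
  simp only [mem_Icc]
  grind

theorem mem_placement_true_region (hF : IsRoof F δ a H m) :
    p ∈ placement δ a H η (true, k, n) '' region F ↔
      p.1 - k * η - a - n ∈ Icc 0 1 ∧
        p.2 ∈ Icc (roofLine F H η k p.1) ((k + 1) * H + δ * n) := by
  rw [mem_placement_true, region, mem_ofPred_eq, hF.reflect, hF.sub_int, roofLine]
  simp only [mem_Icc]
  grind

theorem of_mem_placement_false_interior (hF : IsRoof F δ a H m)
    (hp : p ∈ placement δ a H η (false, k, n) '' interior (region F)) :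
    ⌊p.1 - k * η⌋ = n ∧ p.2 ∈ Ioo (baseLine δ H η k p.1) (roofLine F H η k p.1) := by
  obtain ⟨⟨hx₀, hx₁⟩, hy₀, hy₁⟩ := interior_region_subset F (mem_placement_false.1 hp)
  have hfloor : ⌊p.1 - k * η⌋ = n := Int.floor_eq_iff.2 ⟨by linarith, by linarith⟩
  rw [hF.sub_int] at hy₁
  rw [baseLine, roofLine, hfloor]
  exact ⟨rfl, by linarith, by linarith⟩

theorem of_mem_placement_true_interior (hF : IsRoof F δ a H m) (hη : η = a ∨ δ = 0)
    (hp : p ∈ placement δ a H η (true, k, n) '' interior (region F)) :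
    ⌊p.1 - k * η - a⌋ = n ∧
      p.2 ∈ Ioo (roofLine F H η k p.1) (baseLine δ H η (k + 1) p.1) := by
  obtain ⟨⟨hx₀, hx₁⟩, hy₀, hy₁⟩ := interior_region_subset F (mem_placement_true.1 hp)
  have hfloor : ⌊p.1 - k * η - a⌋ = n := Int.floor_eq_iff.2 ⟨by linarith, by linarith⟩
  rw [hF.reflect, hF.sub_int] at hy₁
  rw [baseLine_add_one hη, roofLine, hfloor]
  exact ⟨rfl, by linarith, by linarith⟩

theorem exists_mem_placement_region (hF : IsRoof F δ a H m) (hη : η = a ∨ δ = 0) (p : ℝ × ℝ) :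
    ∃ i, p ∈ placement δ a H η i '' region F := by
  have hfract (u : ℝ) : u - ⌊u⌋ ∈ Icc (0 : ℝ) 1 := ⟨Int.fract_nonneg u, (Int.fract_lt_one u).le⟩
  obtain ⟨k, hk, hk'⟩ := exists_int_le_and_lt_add_one hF.pos
    (f := fun k ↦ baseLine δ H η k p.1) (fun k ↦ by
      linarith [hF.pos, hF.baseLine_add_le (η := η) k p.1, hF.roofLine_add_le hη k p.1]) p.2
  rcases le_total p.2 (roofLine F H η k p.1) with hroof | hroof
  · exact ⟨(false, k, ⌊p.1 - k * η⌋),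
      hF.mem_placement_false_region.2 ⟨hfract _, hk, hroof⟩⟩
  · rw [baseLine_add_one hη] at hk'
    exact ⟨(true, k, ⌊p.1 - k * η - a⌋),
      hF.mem_placement_true_region.2 ⟨hfract _, hroof, hk'.le⟩⟩

theorem eq_of_mem_placement_interior (hF : IsRoof F δ a H m) (hη : η = a ∨ δ = 0)
    (p : ℝ × ℝ) (i j : Bool × ℤ × ℤ) (hi : p ∈ placement δ a H η i '' interior (region F))
    (hj : p ∈ placement δ a H η j '' interior (region F)) : i = j := by
  have hrow (i : Bool × ℤ × ℤ) (hi : p ∈ placement δ a H η i '' interior (region F)) :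
      p.2 ∈ Ioo (baseLine δ H η i.2.1 p.1) (baseLine δ H η (i.2.1 + 1) p.1) := by
    obtain ⟨_ | _, k, n⟩ := i
    · obtain ⟨-, h₀, h₁⟩ := hF.of_mem_placement_false_interior hi
      exact ⟨h₀, by linarith [hF.pos, hF.roofLine_add_le hη k p.1]⟩
    · obtain ⟨-, h₀, h₁⟩ := hF.of_mem_placement_true_interior hη hi
      exact ⟨by linarith [hF.pos, hF.baseLine_add_le (η := η) k p.1], h₁⟩
  have hk : i.2.1 = j.2.1 := by_contra fun hne ↦
    disjoint_left.1 ((hF.monotone_baseLine hη p.1).pairwise_disjoint_on_Ioo_succ hne)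
      (hrow i hi) (hrow j hj)
  obtain ⟨_ | _, k, n⟩ := i <;> obtain ⟨_ | _, k', n'⟩ := j <;> obtain rfl : k = k' := hk
  · obtain rfl := (hF.of_mem_placement_false_interior hi).1
    obtain rfl := (hF.of_mem_placement_false_interior hj).1
    rfl
  · have hlt := (hF.of_mem_placement_false_interior hi).2.2
    exact absurd (hF.of_mem_placement_true_interior hη hj).2.1 hlt.not_gt
  · have hlt := (hF.of_mem_placement_false_interior hj).2.2
    exact absurd (hF.of_mem_placement_true_interior hη hi).2.1 hlt.not_gt
  · obtain rfl := (hF.of_mem_placement_true_interior hη hi).1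
    obtain rfl := (hF.of_mem_placement_true_interior hη hj).1
    rfl

theorem isMonohedralTiling (hF : IsRoof F δ a H m) (hη : η = a ∨ δ = 0)
    (ψ : (ℝ × ℝ) ≃ᵃ[ℝ] Plane) :
    IsMonohedralTiling (ψ '' region F) (range fun i ↦ ψ '' (placement δ a H η i '' region F)) :=
  isMonohedralTiling_range ψ placement_linear (hF.exists_mem_placement_region hη)
    (hF.eq_of_mem_placement_interior hη)

theorem pos_of_mem (hF : IsRoof F δ a H m) {x : ℝ} (hx : x ∈ Icc 0 1) : 0 < F x :=
  hF.pos.trans_le (hF.le x hx)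

theorem not_isEdgeToEdge_of_mem_vertical_side (ψ : (ℝ × ℝ) ≃ᵃ[ℝ] Plane) {v : ℝ × ℝ}
    (hv : v ∈ extremePoints ℝ (region F)) {x y : ℝ} (hx : x ∈ Icc 0 1) (hy : y ∈ Ioo 0 (F x))
    (i j : Bool × ℤ × ℤ) (h : placement δ a H η i v = placement δ a H η j (x, y)) :
    ¬ IsEdgeToEdge (range fun i ↦ ψ '' (placement δ a H η i '' region F)) := by
  have hpos : 0 < F x := hy.1.trans hy.2
  have hopen : (x, y) ∈ openSegment ℝ (x, 0) (x, F x) := by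
    rw [← Prod.image_mk_openSegment_right, openSegment_eq_Ioo hpos]
    exact mem_image_of_mem _ hy
  exact not_isEdgeToEdge_range ψ hv ⟨hx, le_rfl, hpos.le⟩ ⟨hx, hpos.le, le_rfl⟩
    ⟨hx, Ioo_subset_Icc_self hy⟩ hopen (by simp [hpos.ne]) i j h

theorem not_isEdgeToEdge_of_step_ne_zero (hF : IsRoof F δ a H m) (hδ : δ ≠ 0) (η : ℝ)
    (ψ : (ℝ × ℝ) ≃ᵃ[ℝ] Plane) :
    ¬ IsEdgeToEdge (range fun i ↦ ψ '' (placement δ a H η i '' region F)) := by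
  have hF₀ : 0 < F 0 := hF.pos_of_mem ⟨le_rfl, zero_le_one⟩
  have hF₁ : 0 < F 1 := hF.pos_of_mem ⟨zero_le_one, le_rfl⟩
  have hstep : F 1 = F 0 + δ := by simpa only [zero_add] using hF.add_one 0
  rcases hδ.lt_or_gt with hneg | hpos
  · exact not_isEdgeToEdge_of_mem_vertical_side (x := 0) (y := -δ) ψ
      (mk_zero_mem_extremePoints_region (Or.inr rfl) hF₁.le) ⟨le_rfl, zero_le_one⟩
      ⟨by linarith, by linarith⟩ (false, 0, 0) (false, 0, 1) (by simp [placement])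
  · exact not_isEdgeToEdge_of_mem_vertical_side (x := 1) (y := δ) ψ
      (mk_zero_mem_extremePoints_region (Or.inl rfl) hF₀.le) ⟨zero_le_one, le_rfl⟩
      ⟨hpos, by linarith⟩ (false, 0, 1) (false, 0, 0) (by simp [placement])

theorem not_isEdgeToEdge_of_shift (hF : IsRoof F 0 a H m) (ψ : (ℝ × ℝ) ≃ᵃ[ℝ] Plane) :
    ¬ IsEdgeToEdge (range fun i ↦ ψ '' (placement 0 a H (a - 1 / 2) i '' region F)) := by
  have hbase {x : ℝ} (hx : x ∈ Icc 0 1) : (x, (0 : ℝ)) ∈ region F :=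
    ⟨hx, le_rfl, (hF.pos_of_mem hx).le⟩
  have hmid : ((1 / 2, 0) : ℝ × ℝ) ∈ openSegment ℝ (0, 0) (1, 0) := by
    rw [← Prod.image_mk_openSegment_left, openSegment_eq_Ioo zero_lt_one]
    exact mem_image_of_mem _ ⟨by norm_num, by norm_num⟩
  refine not_isEdgeToEdge_range ψ (v := (1, 0))
    (mk_zero_mem_extremePoints_region (Or.inr rfl) (hF.pos_of_mem ⟨zero_le_one, le_rfl⟩).le)
    (hbase ⟨le_rfl, zero_le_one⟩) (hbase ⟨zero_le_one, le_rfl⟩)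
    (hbase ⟨by norm_num, by norm_num⟩) hmid (by simp) (true, 0, 0) (false, 1, 0) ?_
  ext <;> simp [placement]

theorem exists_tiling (hF : IsRoof F δ a H m) (ψ : (ℝ × ℝ) ≃ᵃ[ℝ] Plane) :
    ∃ T : Set (Set Plane), IsMonohedralTiling (ψ '' region F) T ∧ ¬ IsEdgeToEdge T := by
  obtain rfl | hδ := eq_or_ne δ 0
  · exact ⟨_, hF.isMonohedralTiling (Or.inr rfl) ψ, hF.not_isEdgeToEdge_of_shift ψ⟩
  · exact ⟨_, hF.isMonohedralTiling (Or.inl rfl) ψ,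
      hF.not_isEdgeToEdge_of_step_ne_zero hδ a ψ⟩

end IsRoof

/-! ### The zigzag through the vertices of the pentagon -/

/-- The `1`-periodic function rising linearly from `0` to `1` on `[0, a]` and falling back to `0`
on `[a, 1]`. -/
def tent (a x : ℝ) : ℝ := min (Int.fract x / a) ((1 - Int.fract x) / (1 - a))

/-- The polygonal line through `(0, c)`, `(a, h)` and `(1, 1)`, continued to the whole real line
so that it is invariant under the translation by `(1, 1 - c)`. -/
def zigzag (c a h x : ℝ) : ℝ := c + (1 - c) * x + (h - (c + (1 - c) * a)) * tent a x

/-- The vertices of the pentagon in the affine coordinates sending its vertices `3`, `4`, `0` to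
`(0, 0)`, `(1, 0)`, `(1, 1)`; the side joining the vertices `2` and `3` is then vertical. -/
def modelVertex (c a h : ℝ) : Fin 5 → ℝ × ℝ := ![(1, 1), (a, h), (0, c), (0, 0), (1, 0)]

section Zigzag

variable {a : ℝ} (ha₀ : 0 < a) (ha₁ : a < 1)

include ha₀ ha₁

theorem tent_of_fract_le {x : ℝ} (hx : Int.fract x ≤ a) : tent a x = Int.fract x / a := by
  refine min_eq_left (((div_le_one ha₀).2 hx).trans ?_)
  rw [one_le_div (by linarith)]
  linarith

theorem tent_of_le_fract {x : ℝ} (hx : a ≤ Int.fract x) :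
    tent a x = (1 - Int.fract x) / (1 - a) := by
  refine min_eq_right (le_trans ?_ ((one_le_div ha₀).2 hx))
  rw [div_le_one (by linarith)]
  linarith

theorem tent_nonneg (x : ℝ) : 0 ≤ tent a x :=
  le_min (div_nonneg (Int.fract_nonneg x) ha₀.le)
    (div_nonneg (by linarith [Int.fract_lt_one x]) (by linarith))

theorem tent_eq_of_mem_Icc {x : ℝ} (hx : x ∈ Icc 0 1) :
    tent a x = min (x / a) ((1 - x) / (1 - a)) := by
  obtain rfl | hx₁ := eq_or_lt_of_le hx.2
  · have h₀ : 0 ≤ 1 / (1 - a) := one_div_nonneg.2 (by linarith)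
    have h₁ : 0 ≤ 1 / a := one_div_nonneg.2 ha₀.le
    simp only [tent, Int.fract_one, sub_zero, zero_div, sub_self, min_eq_left h₀, min_eq_right h₁]
  · rw [tent, Int.fract_eq_self.2 ⟨hx.1, hx₁⟩]

theorem tent_reflect (x : ℝ) : tent a (1 + a - x) = 1 - tent a x := by
  have hfloor := Int.floor_add_fract x
  have hnonneg := Int.fract_nonneg x
  have hlt := Int.fract_lt_one x
  rcases le_or_gt (Int.fract x) a with hx | hx
  · have hfract : Int.fract (1 + a - x) = a - Int.fract x := Int.fract_eq_iff.2
      ⟨by linarith, by linarith, 1 - ⌊x⌋, by push_cast; linarith⟩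
    rw [tent_of_fract_le ha₀ ha₁ hx, tent_of_fract_le ha₀ ha₁ (by linarith), hfract]
    field_simp
  · have hfract : Int.fract (1 + a - x) = 1 + a - Int.fract x := Int.fract_eq_iff.2
      ⟨by linarith, by linarith, -⌊x⌋, by push_cast; linarith⟩
    rw [tent_of_le_fract ha₀ ha₁ hx.le, tent_of_le_fract ha₀ ha₁ (by linarith), hfract]
    have : 1 - a ≠ 0 := by linarith
    field_simp
    ring

theorem isRoof_zigzag {c h : ℝ} (hc : 0 < c) (hh : c + (1 - c) * a < h) :
    IsRoof (zigzag c a h) (1 - c) a (1 + h) (min c 1) where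
  add_one x := by
    rw [zigzag, zigzag, tent, tent, Int.fract_add_one]
    ring
  reflect x := by
    rw [zigzag, zigzag, tent_reflect ha₀ ha₁]
    ring
  pos := lt_min hc zero_lt_one
  le x hx := by
    have hchord : min c 1 ≤ c + (1 - c) * x := by
      nlinarith [min_le_left c 1, min_le_right c 1, hx.1, hx.2]
    have htent : 0 ≤ (h - (c + (1 - c) * a)) * tent a x :=
      mul_nonneg (by linarith) (tent_nonneg ha₀ ha₁ x)
    exact hchord.trans (le_add_of_nonneg_right htent)

theorem concaveOn_tent : ConcaveOn ℝ (Icc 0 1) (tent a) := by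
  have haffine (α β : ℝ) : ConcaveOn ℝ (Icc (0 : ℝ) 1) fun x ↦ α + β * x :=
    ⟨convex_Icc 0 1, fun x _ y _ s t _ _ hst ↦ by
      simp only [smul_eq_mul]
      linear_combination α * hst⟩
  refine ((haffine 0 a⁻¹).inf (haffine (1 - a)⁻¹ (-(1 - a)⁻¹))).congr fun x hx ↦ ?_
  rw [tent_eq_of_mem_Icc ha₀ ha₁ hx, Pi.inf_apply]
  congr 1 <;> ring

theorem concaveOn_zigzag {c h : ℝ} (hh : c + (1 - c) * a ≤ h) :
    ConcaveOn ℝ (Icc 0 1) (zigzag c a h) := by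
  refine ⟨convex_Icc 0 1, fun x hx y hy s t hs ht hst ↦ ?_⟩
  have htent := mul_le_mul_of_nonneg_left ((concaveOn_tent ha₀ ha₁).2 hx hy hs ht hst)
    (sub_nonneg.2 hh)
  simp only [zigzag, smul_eq_mul] at htent ⊢
  linear_combination htent + c * hst

theorem zigzag_of_mem_Icc_left (c h : ℝ) {x : ℝ} (hx : x ∈ Icc 0 a) :
    zigzag c a h x = c + (h - c) * (x / a) := by
  have hfract : Int.fract x = x := Int.fract_eq_self.2 ⟨hx.1, hx.2.trans_lt ha₁⟩
  rw [zigzag, tent_of_fract_le ha₀ ha₁ (hfract.trans_le hx.2), hfract]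
  field_simp
  ring

theorem zigzag_of_mem_Icc_right (c h : ℝ) {x : ℝ} (hx : x ∈ Icc a 1) :
    zigzag c a h x = 1 + (h - 1) * ((1 - x) / (1 - a)) := by
  have ha : 0 < 1 - a := by linarith
  have hmin : (1 - x) / (1 - a) ≤ x / a :=
    ((div_le_one ha).2 (by linarith [hx.1])).trans ((one_le_div ha₀).2 hx.1)
  rw [zigzag, tent_eq_of_mem_Icc ha₀ ha₁ ⟨ha₀.le.trans hx.1, hx.2⟩, min_eq_right hmin]
  field_simp
  ring

theorem zigzag_zero (c h : ℝ) : zigzag c a h 0 = c := by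
  simp [zigzag_of_mem_Icc_left ha₀ ha₁ c h ⟨le_rfl, ha₀.le⟩]

theorem zigzag_peak (c h : ℝ) : zigzag c a h a = h := by
  simp [zigzag_of_mem_Icc_left ha₀ ha₁ c h ⟨ha₀.le, le_rfl⟩, ha₀.ne']

theorem zigzag_one (c h : ℝ) : zigzag c a h 1 = 1 := by
  simp [zigzag_of_mem_Icc_right ha₀ ha₁ c h ⟨ha₁.le, le_rfl⟩]

theorem convex_region_zigzag {c h : ℝ} (hh : c + (1 - c) * a ≤ h) :
    Convex ℝ (region (zigzag c a h)) := by
  have hupper : Convex ℝ {p : ℝ × ℝ | 0 ≤ p.2} :=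
    convex_halfSpace_ge (LinearMap.snd ℝ ℝ ℝ).isLinear 0
  convert (concaveOn_zigzag ha₀ ha₁ hh).convex_hypograph.inter hupper using 1
  ext p
  simp only [region, mem_ofPred_eq, mem_inter_iff, mem_Icc]
  tauto

theorem convexHull_modelVertex_subset {c h : ℝ} (hc : 0 < c) (hh : c + (1 - c) * a < h) :
    convexHull ℝ (range (modelVertex c a h)) ⊆ region (zigzag c a h) := by
  have hroof := isRoof_zigzag ha₀ ha₁ hc hh
  have hbase {x : ℝ} (hx : x ∈ Icc 0 1) : (x, (0 : ℝ)) ∈ region (zigzag c a h) :=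
    ⟨hx, le_rfl, (hroof.pos_of_mem hx).le⟩
  have htop {x y : ℝ} (hx : x ∈ Icc 0 1) (hy : zigzag c a h x = y) :
      (x, y) ∈ region (zigzag c a h) :=
    ⟨hx, hy ▸ (hroof.pos_of_mem hx).le, hy.ge⟩
  have h₀ : (0 : ℝ) ∈ Icc (0 : ℝ) 1 := ⟨le_rfl, zero_le_one⟩
  have h₁ : (1 : ℝ) ∈ Icc (0 : ℝ) 1 := ⟨zero_le_one, le_rfl⟩
  refine convexHull_min ?_ (convex_region_zigzag ha₀ ha₁ hh.le)
  rintro _ ⟨i, rfl⟩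
  fin_cases i
  exacts [htop h₁ (zigzag_one ha₀ ha₁ c h), htop ⟨ha₀.le, ha₁.le⟩ (zigzag_peak ha₀ ha₁ c h),
    htop h₀ (zigzag_zero ha₀ ha₁ c h), hbase h₀, hbase h₁]

theorem mk_zigzag_mem_convexHull_modelVertex (c h : ℝ) {x : ℝ} (hx : x ∈ Icc 0 1) :
    (x, zigzag c a h x) ∈ convexHull ℝ (range (modelVertex c a h)) := by
  have hsegment (i j : Fin 5) :
      segment ℝ (modelVertex c a h i) (modelVertex c a h j) ⊆ convexHull ℝ (range _) :=
    segment_subset_convexHull (mem_range_self i) (mem_range_self j)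
  rcases le_total x a with hxa | hxa
  · rw [zigzag_of_mem_Icc_left ha₀ ha₁ c h ⟨hx.1, hxa⟩]
    refine hsegment 2 1 ⟨1 - x / a, x / a, sub_nonneg.2 ((div_le_one ha₀).2 hxa),
      div_nonneg hx.1 ha₀.le, by ring, Prod.ext ?_ ?_⟩
    · change (1 - x / a) * 0 + x / a * a = x
      field_simp
      ring
    · change (1 - x / a) * c + x / a * h = _
      ring
  · have ha : 0 < 1 - a := by linarith
    rw [zigzag_of_mem_Icc_right ha₀ ha₁ c h ⟨hxa, hx.2⟩]
    refine hsegment 0 1 ⟨1 - (1 - x) / (1 - a), (1 - x) / (1 - a),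
      sub_nonneg.2 ((div_le_one ha).2 (by linarith)), div_nonneg (by linarith [hx.2]) ha.le,
      by ring, Prod.ext ?_ ?_⟩
    · change (1 - (1 - x) / (1 - a)) * 1 + (1 - x) / (1 - a) * a = x
      field_simp
      ring
    · change (1 - (1 - x) / (1 - a)) * 1 + (1 - x) / (1 - a) * h = _
      ring

theorem convexHull_modelVertex {c h : ℝ} (hc : 0 < c) (hh : c + (1 - c) * a < h) :
    convexHull ℝ (range (modelVertex c a h)) = region (zigzag c a h) := by
  refine (convexHull_modelVertex_subset ha₀ ha₁ hc hh).antisymm ?_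
  rintro ⟨x, y⟩ ⟨hx, hy⟩
  have hbase : (x, (0 : ℝ)) ∈ convexHull ℝ (range (modelVertex c a h)) := by
    refine segment_subset_convexHull (mem_range_self 3) (mem_range_self 4)
      ⟨1 - x, x, sub_nonneg.2 hx.2, hx.1, by ring, ?_⟩
    ext <;> simp [modelVertex]
  have hvertical : Prod.mk x '' segment ℝ 0 (zigzag c a h x) ⊆
      convexHull ℝ (range (modelVertex c a h)) := by
    rw [Prod.image_mk_segment_right]
    exact (convex_convexHull ℝ _).segment_subset hbase
      (mk_zigzag_mem_convexHull_modelVertex ha₀ ha₁ c h hx)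
  rw [segment_eq_Icc ((isRoof_zigzag ha₀ ha₁ hc hh).pos_of_mem hx).le] at hvertical
  exact hvertical (mem_image_of_mem _ hy)

end Zigzag

/-! ### Angles and sides of convex polygons -/

section PlaneGeometry

open Module

section LinearAlgebra

variable {V : Type*} [AddCommGroup V] [Module ℝ V]

theorem linearIndependent_pair_of_map {f : V →ₗ[ℝ] ℝ} {e x : V} (he : e ≠ 0) (hfe : f e = 0)
    (hx : f x ≠ 0) : LinearIndependent ℝ ![e, x] := by
  refine LinearIndependent.pair_iff.2 fun s t h ↦ ?_
  have ht : t = 0 := by simpa [hfe, hx] using congrArg f h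
  subst ht
  exact ⟨by simpa [he] using h, rfl⟩

variable [Fact (finrank ℝ V = 2)]

theorem exists_affineEquiv_of_linearIndependent {u w : V} (huw : LinearIndependent ℝ ![u, w])
    (O : V) : ∃ ψ : (ℝ × ℝ) ≃ᵃ[ℝ] V, ∀ p, ψ p = O + (p.1 • u + p.2 • w) := by
  let b := basisOfLinearIndependentOfCardEqFinrank huw (by
    rw [Fintype.card_fin, Fact.out (p := finrank ℝ V = 2)])
  let φ : (ℝ × ℝ) ≃ₗ[ℝ] V := (LinearEquiv.finTwoArrow ℝ ℝ).symm.trans b.equivFun.symm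
  refine ⟨φ.toAffineEquiv.trans (AffineEquiv.constVAdd ℝ V O), fun p ↦ ?_⟩
  simp [φ, b, Fin.sum_univ_two]

theorem finrank_ker_eq_one {f : V →ₗ[ℝ] ℝ} (hf : f ≠ 0) : finrank ℝ f.ker = 1 := by
  have : FiniteDimensional ℝ V := .of_fact_finrank_eq_two
  have := Module.Dual.finrank_ker_add_one_of_ne_zero hf
  rw [Fact.out (p := finrank ℝ V = 2)] at this
  lia

theorem collinear_of_forall_map_eq {f : V →ₗ[ℝ] ℝ} (hf : f ≠ 0) {s : Set V}
    (hs : ∀ x ∈ s, ∀ y ∈ s, f x = f y) : Collinear ℝ s := by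
  have hspan : vectorSpan ℝ s ≤ f.ker := by
    rw [vectorSpan, Submodule.span_le]
    rintro _ ⟨x, hx, y, hy, rfl⟩
    simp [hs x hx y hy]
  have : FiniteDimensional ℝ V := .of_fact_finrank_eq_two
  rw [collinear_iff_finrank_le_one, ← finrank_ker_eq_one hf]
  exact Submodule.finrank_mono hspan

end LinearAlgebra

variable {V : Type*} [NormedAddCommGroup V] [InnerProductSpace ℝ V] [Fact (finrank ℝ V = 2)]
  (o : Orientation ℝ V (Fin 2))

theorem oangle_sign_eq_of_pos {f : V →ₗ[ℝ] ℝ} {e x y : V} (he : e ≠ 0) (hfe : f e = 0)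
    (hx : 0 < f x) (hy : 0 < f y) : (o.oangle e x).sign = (o.oangle e y).sign := by
  have hf : f ≠ 0 := by
    rintro rfl
    exact hx.ne' rfl
  let r := f y / f x
  have hker : y - r • x ∈ f.ker := by simp [r, hx.ne']
  have he' : (⟨e, hfe⟩ : f.ker) ≠ 0 := fun h ↦ he (congrArg Subtype.val h)
  obtain ⟨t, ht⟩ := (finrank_eq_one_iff_of_nonzero' _ he').1 (finrank_ker_eq_one hf) ⟨_, hker⟩
  have hdecomp : y = t • e + r • x := (sub_eq_iff_eq_add.1 (congrArg Subtype.val ht).symm)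
  rw [hdecomp, o.oangle_sign_smul_add_smul_right, sign_pos (div_pos hy hx), one_mul]

theorem oangle_sign_ne_zero_of_linearIndependent {x y : V} (h : LinearIndependent ℝ ![x, y]) :
    (o.oangle x y).sign ≠ 0 := by
  rw [Ne, Real.Angle.sign_eq_zero_iff, o.oangle_eq_zero_or_eq_pi_iff_not_linearIndependent]
  exact not_not_intro h

theorem oangle_eq_pi_of_angle_add_angle_add_angle {x y z w : V}
    (hxy : (o.oangle x y).sign ≠ 0) (hyz : (o.oangle y z).sign = (o.oangle x y).sign)
    (hzw : (o.oangle z w).sign = (o.oangle x y).sign)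
    (h : InnerProductGeometry.angle x y + InnerProductGeometry.angle y z +
      InnerProductGeometry.angle z w = Real.pi) : o.oangle x w = Real.pi := by
  have hx := o.left_ne_zero_of_oangle_sign_ne_zero hxy
  have hy := o.right_ne_zero_of_oangle_sign_ne_zero hxy
  have hz := o.right_ne_zero_of_oangle_sign_ne_zero (hyz.trans_ne hxy)
  have hw := o.right_ne_zero_of_oangle_sign_ne_zero (hzw.trans_ne hxy)
  rw [← o.oangle_add hx hz hw, ← o.oangle_add hx hy hz]
  rcases SignType.trichotomy (o.oangle x y).sign with hs | hs | hs
  · rw [o.oangle_eq_neg_angle_of_sign_eq_neg_one hs,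
      o.oangle_eq_neg_angle_of_sign_eq_neg_one (hyz.trans hs),
      o.oangle_eq_neg_angle_of_sign_eq_neg_one (hzw.trans hs), ← Real.Angle.neg_coe_pi, ← h]
    rw [Real.Angle.coe_add, Real.Angle.coe_add, neg_add, neg_add]
  · exact absurd hs hxy
  · rw [o.oangle_eq_angle_of_sign_eq_one hs, o.oangle_eq_angle_of_sign_eq_one (hyz.trans hs),
      o.oangle_eq_angle_of_sign_eq_one (hzw.trans hs), ← h]
    rw [Real.Angle.coe_add, Real.Angle.coe_add]

end PlaneGeometry

instance fact_finrank_plane : Fact (Module.finrank ℝ Plane = 2) := ⟨by simp⟩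

theorem fin_add_one_ne {n : ℕ} [NeZero n] (hn : 2 < n) (i : Fin n) : i + 1 ≠ i := by
  rw [Ne, add_eq_left, Fin.one_eq_zero_iff]
  lia

theorem fin_add_one_add_one_ne {n : ℕ} [NeZero n] (hn : 2 < n) (i : Fin n) : i + 1 + 1 ≠ i := by
  rw [Ne, add_assoc, add_eq_left, Fin.ext_iff, Fin.val_add, Fin.val_one', Fin.val_zero,
    Nat.mod_eq_of_lt (by lia : 1 < n), Nat.mod_eq_of_lt hn]
  exact two_ne_zero

namespace ConvexPolygon

variable {n : ℕ} [NeZero n] (P : ConvexPolygon n)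

/-- The side from the `i`-th vertex to the next one, as a vector. -/
def edge (i : Fin n) : Plane := P.V (i + 1) - P.V i

theorem not_wbtw {i j k : Fin n} (hij : i ≠ j) (hkj : k ≠ j) :
    ¬ Wbtw ℝ (P.V i) (P.V j) (P.V k) := fun h ↦
  P.strictlyConvex j (segment_subset_convexHull (mem_image_of_mem P.V hij)
    (mem_image_of_mem P.V hkj) (mem_segment_iff_wbtw.2 h))

theorem not_collinear {i j k : Fin n} (hij : i ≠ j) (hjk : j ≠ k) (hki : k ≠ i) :
    ¬ Collinear ℝ {P.V i, P.V j, P.V k} := fun h ↦ by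
  rcases h.wbtw_or_wbtw_or_wbtw with h | h | h
  exacts [P.not_wbtw hij hjk.symm h, P.not_wbtw hjk hki.symm h, P.not_wbtw hki hij.symm h]

theorem interior_carrier_nonempty (hn : 2 < n) : (interior P.carrier).Nonempty := by
  obtain ⟨k, hk₀, hk₁⟩ := Fin.exists_ne_and_ne_of_two_lt (0 : Fin n) 1 hn
  have hind : AffineIndependent ℝ ![P.V 0, P.V 1, P.V k] :=
    affineIndependent_iff_not_collinear_set.2
      (P.not_collinear (by simpa using (fin_add_one_ne hn 0).symm) hk₁.symm hk₀)
  have hspan : affineSpan ℝ (range ![P.V 0, P.V 1, P.V k]) = ⊤ :=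
    hind.affineSpan_eq_top_iff_card_eq_finrank_add_one.2 (by simp)
  refine (interior_convexHull_nonempty_iff_affineSpan_eq_top.2 hspan).mono
    (interior_mono (convexHull_mono ?_))
  rintro _ ⟨j, rfl⟩
  fin_cases j <;> exact mem_range_self _

theorem exists_supporting_functional (hn : 2 < n) (i : Fin n) :
    ∃ f : Plane →ₗ[ℝ] ℝ, f (P.V (i + 1)) = f (P.V i) ∧
      ∀ j, j ≠ i → j ≠ i + 1 → f (P.V j) < f (P.V i) := by
  have hmid : midpoint ℝ (P.V i) (P.V (i + 1)) ∉ interior P.carrier :=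
    (P.cyclic i (midpoint_mem_segment _ _)).2
  obtain ⟨f, hf, hle⟩ := geometric_hahn_banach_of_nonempty_interior_point
    (convex_convexHull ℝ _) hmid (P.interior_carrier_nonempty hn)
  have hV (j : Fin n) : f (P.V j) ≤ (f (P.V i) + f (P.V (i + 1))) / 2 := by
    have := hle _ (subset_convexHull ℝ _ (mem_range_self j))
    rwa [midpoint_eq_smul_add, map_smul, map_add, smul_eq_mul, invOf_eq_inv, inv_mul_eq_div]
      at this
  have hends : f (P.V (i + 1)) = f (P.V i) := by linarith [hV i, hV (i + 1)]
  have hle' (j : Fin n) : f (P.V j) ≤ f (P.V i) := by linarith [hV j]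
  refine ⟨f, hends, fun j hj hj' ↦ lt_of_le_of_ne (hle' j) fun heq ↦ ?_⟩
  change f (P.V j) = f (P.V i) at heq
  refine P.not_collinear (fin_add_one_ne hn i).symm hj'.symm hj (collinear_of_forall_map_eq
    (f := f) (fun h ↦ hf (ContinuousLinearMap.coe_injective h)) ?_)
  simp [hends, heq]

theorem edge_ne_zero (hn : 2 < n) (i : Fin n) : P.edge i ≠ 0 := fun h ↦
  P.not_wbtw (fin_add_one_ne hn i) (fin_add_one_ne hn i) (by
    rw [sub_eq_zero.1 h]
    exact wbtw_self_left _ _ _)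

theorem exists_functional_edge (hn : 2 < n) (i : Fin n) :
    ∃ f : Plane →ₗ[ℝ] ℝ, f (P.edge (i + 1)) = 0 ∧ 0 < f (P.edge i) ∧
      f (P.edge (i + 1 + 1)) < 0 := by
  obtain ⟨f, hf, hlt⟩ := P.exists_supporting_functional hn (i + 1)
  have h₁ := hlt i (fin_add_one_ne hn i).symm (fin_add_one_add_one_ne hn i).symm
  have h₂ := hlt (i + 1 + 1 + 1) (fin_add_one_add_one_ne hn _) (fin_add_one_ne hn _)
  refine ⟨f, ?_, ?_, ?_⟩ <;> simp only [edge, map_sub] <;> linarith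

theorem angle_add_one (i : Fin n) :
    P.angle (i + 1) = Real.pi - InnerProductGeometry.angle (P.edge i) (P.edge (i + 1)) := by
  rw [← InnerProductGeometry.angle_neg_left, edge, neg_sub, angle, add_sub_cancel_right]
  rfl

theorem linearIndependent_edge (hn : 2 < n) (i : Fin n) :
    LinearIndependent ℝ ![P.edge i, P.edge (i + 1)] := by
  obtain ⟨f, hf, hpos, -⟩ := P.exists_functional_edge hn i
  exact LinearIndependent.pair_symm_iff.1
    (linearIndependent_pair_of_map (P.edge_ne_zero hn _) hf hpos.ne')

theorem oangle_edge_sign (hn : 2 < n) (o : Orientation ℝ Plane (Fin 2)) (i : Fin n) :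
    (o.oangle (P.edge (i + 1)) (P.edge (i + 1 + 1))).sign =
      (o.oangle (P.edge i) (P.edge (i + 1))).sign := by
  obtain ⟨f, hf, hpos, hneg⟩ := P.exists_functional_edge hn i
  have h := oangle_sign_eq_of_pos o (P.edge_ne_zero hn _) hf hpos
    (y := -P.edge (i + 1 + 1)) (by rwa [map_neg, neg_pos])
  rw [o.oangle_sign_neg_right] at h
  rw [← neg_neg (o.oangle _ (P.edge (i + 1 + 1))).sign, ← h, ← Real.Angle.sign_neg, ← o.oangle_rev]

theorem sameRay_edge_neg_edge (hn : 2 < n) (i : Fin n)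
    (h : P.angle (i + 1) + P.angle (i + 1 + 1) + P.angle (i + 1 + 1 + 1) = 2 * Real.pi) :
    SameRay ℝ (P.edge i) (-P.edge (i + 1 + 1 + 1)) := by
  let o : Orientation ℝ Plane (Fin 2) := (EuclideanSpace.basisFun (Fin 2) ℝ).toBasis.orientation
  rw [angle_add_one, angle_add_one, angle_add_one] at h
  have hsign := P.oangle_edge_sign hn o
  have hpi : o.oangle (P.edge i) (P.edge (i + 1 + 1 + 1)) = Real.pi :=
    oangle_eq_pi_of_angle_add_angle_add_angle o
      (oangle_sign_ne_zero_of_linearIndependent o (P.linearIndependent_edge hn i))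
      (hsign i) ((hsign (i + 1)).trans (hsign i)) (by linarith)
  exact (o.oangle_eq_pi_iff_sameRay_neg.1 hpi).2.2

end ConvexPolygon

/-! ### The pentagon in affine coordinates -/

theorem affineMap_prod_apply (g : (ℝ × ℝ) →ᵃ[ℝ] ℝ) (p : ℝ × ℝ) :
    g p = p.1 * g.linear (1, 0) + p.2 * g.linear (0, 1) + g 0 := by
  have hp : p = p.1 • (1, 0) + p.2 • (0, 1) := by ext <;> simp
  have hg : g p = g.linear p + g 0 := congrFun g.decomp p
  rw [hg, ← smul_eq_mul, ← smul_eq_mul, ← map_smul, ← map_smul, ← map_add, ← hp]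

section NormalForm

variable {P : ConvexPentagon} {ψ : (ℝ × ℝ) ≃ᵃ[ℝ] Plane} {c a h : ℝ}
  (hV : P.V = ψ ∘ modelVertex c a h)

include hV

theorem exists_supporting_functional_modelVertex (i : Fin 5) :
    ∃ α β : ℝ, (modelVertex c a h (i + 1)).1 * α + (modelVertex c a h (i + 1)).2 * β =
        (modelVertex c a h i).1 * α + (modelVertex c a h i).2 * β ∧
      ∀ j, j ≠ i → j ≠ i + 1 → (modelVertex c a h j).1 * α + (modelVertex c a h j).2 * β <
        (modelVertex c a h i).1 * α + (modelVertex c a h i).2 * β := by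
  obtain ⟨f, hf, hlt⟩ := P.exists_supporting_functional (by norm_num) i
  have hfV (j : Fin 5) := affineMap_prod_apply (f.toAffineMap.comp ψ.toAffineMap)
    (modelVertex c a h j)
  change ∀ j, f ((ψ ∘ modelVertex c a h) j) = _ at hfV
  simp only [← hV] at hfV
  simp only [hfV, add_left_inj, add_lt_add_iff_right] at hf hlt
  exact ⟨_, _, hf, hlt⟩

theorem modelVertex_peak_pos (hc : 0 < c) : 0 < a := by
  obtain ⟨α, β, h₃, hlt⟩ := exists_supporting_functional_modelVertex hV 2
  have h₁ : a * α + h * β < 0 * α + c * β := hlt 1 (by decide) (by decide)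
  have h₄ : 1 * α + 0 * β < 0 * α + c * β := hlt 4 (by decide) (by decide)
  replace h₃ : 0 * α + 0 * β = 0 * α + c * β := h₃
  obtain rfl : β = 0 := by simpa [hc.ne'] using h₃
  nlinarith

theorem modelVertex_peak_lt_one : a < 1 := by
  obtain ⟨α, β, h₀, hlt⟩ := exists_supporting_functional_modelVertex hV 4
  have h₁ : a * α + h * β < 1 * α + 0 * β := hlt 1 (by decide) (by decide)
  have h₃ : 0 * α + 0 * β < 1 * α + 0 * β := hlt 3 (by decide) (by decide)
  replace h₀ : 1 * α + 1 * β = 1 * α + 0 * β := h₀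
  obtain rfl : β = 0 := by simpa using h₀
  nlinarith

theorem chord_lt_modelVertex_peak (hc : 0 < c) : c + (1 - c) * a < h := by
  have ha := modelVertex_peak_pos hV hc
  obtain ⟨α, β, h₂, hlt⟩ := exists_supporting_functional_modelVertex hV 1
  have h₀ : 1 * α + 1 * β < a * α + h * β := hlt 0 (by decide) (by decide)
  have h₃ : 0 * α + 0 * β < a * α + h * β := hlt 3 (by decide) (by decide)
  replace h₂ : 0 * α + c * β = a * α + h * β := h₂
  have hβ : 0 < β := by nlinarith
  have hα : a * α < a * (c * β - β) := mul_lt_mul_of_pos_left (by linarith) ha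
  refine lt_of_mul_lt_mul_right ?_ hβ.le
  linarith

end NormalForm

theorem exists_eq_comp_modelVertex (P : ConvexPentagon)
    (hang : P.angle 0 + P.angle 1 + P.angle 2 = 2 * Real.pi) :
    ∃ (ψ : (ℝ × ℝ) ≃ᵃ[ℝ] Plane) (c a h : ℝ), 0 < c ∧ P.V = ψ ∘ modelVertex c a h := by
  obtain ⟨c, hc, hedge⟩ := (P.sameRay_edge_neg_edge (by norm_num) 4 hang).exists_pos_left
    (P.edge_ne_zero (by norm_num) _) (neg_ne_zero.2 (P.edge_ne_zero (by norm_num) _))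
  obtain ⟨ψ, hψ⟩ := exists_affineEquiv_of_linearIndependent
    (P.linearIndependent_edge (by norm_num) 3) (P.V 3)
  refine ⟨ψ, c, (ψ.symm (P.V 1)).1, (ψ.symm (P.V 1)).2, hc, funext fun i ↦ ?_⟩
  change c • (P.V 0 - P.V 4) = -(P.V 3 - P.V 2) at hedge
  change ∀ p : ℝ × ℝ, ψ p = P.V 3 + (p.1 • (P.V 4 - P.V 3) + p.2 • (P.V 0 - P.V 4)) at hψ
  obtain rfl | hi := eq_or_ne i 1
  · exact (ψ.apply_symm_apply _).symm
  rw [Function.comp_apply, hψ]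
  fin_cases i <;> simp_all [modelVertex]

theorem statement_5_general (P : ConvexPentagon)
    (hang : P.angle 0 + P.angle 1 + P.angle 2 = 2 * Real.pi) :
    ∃ T : Set (Set Plane), IsMonohedralTiling P.carrier T ∧ ¬ IsEdgeToEdge T := by
  obtain ⟨ψ, c, a, h, hc, hV⟩ := exists_eq_comp_modelVertex P hang
  have ha₀ : 0 < a := modelVertex_peak_pos hV hc
  have ha₁ : a < 1 := modelVertex_peak_lt_one hV
  have hh : c + (1 - c) * a < h := chord_lt_modelVertex_peak hV hc
  have hcarrier : P.carrier = ψ '' region (zigzag c a h) := by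
    rw [ConvexPolygon.carrier, hV, range_comp, ← convexHull_modelVertex ha₀ ha₁ hc hh]
    exact (ψ.toAffineMap.image_convexHull _).symm
  rw [hcarrier]
  exact (isRoof_zigzag ha₀ ha₁ hc hh).exists_tiling ψ

/-- every convex pentagon with `A + B + C = 360°` and `a = d`
admits a monohedral tiling of the plane that is not edge-to-edge. -/
theorem statement_5 (P : ConvexPentagon)
    (hang : P.angle 0 + P.angle 1 + P.angle 2 = 2 * Real.pi)
    (hside : P.side 0 = P.side 3) :
    ∃ T : Set (Set Plane), IsMonohedralTiling P.carrier T ∧ ¬ IsEdgeToEdge T :=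
  statement_5_general P hang
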